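/- arXiv:cs/0507013 — 2 statements merged into one kernel-verified Lean document; each statement's English description precedes it below -/
import Mathlib

section
/- Let S and T be finite sets of real numbers with S ∩ T = ∅ and |S| > |T| ≥ 1. There exists a subset R ⊆ S with |R| = |S| − |T| such that the assignment A_R has minimum cost among all assignments from S to T, and such that for every k with 1 ≤ k ≤ |S| − |T|, the k-th smallest element r_k of R satisfies H(r_k) = k. -/
open Finset

/-- An assignment from `S` to `T`: every point of `S` maps to a point of `T`, and
every point of `T` is hit. -/
def IsAssignment (S T : Finset ℝ) (A : ℝ → ℝ) : Prop :=
  (∀ s ∈ S, A s ∈ T) ∧ ∀ t ∈ T, ∃ s ∈ S, A s = t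

/-- The height function `H(x) = |{s ∈ S : s ≤ x}| − |{t ∈ T : t ≤ x}|`. -/
noncomputable def heightFn (S T : Finset ℝ) (x : ℝ) : ℤ :=
  ((S.filter (fun s => s ≤ x)).card : ℤ) - ((T.filter (fun t => t ≤ x)).card : ℤ)

/-- `N` assigns to each point of `S` a nearest neighbor in `T`. -/
def IsNearestNeighbor (S T : Finset ℝ) (N : ℝ → ℝ) : Prop :=
  ∀ s ∈ S, N s ∈ T ∧ ∀ t ∈ T, |s - N s| ≤ |s - t|

/-- `A` is the assignment `A_R`: it maps each `r ∈ R` to its nearest neighbor `N r`,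
and maps the `k`-th smallest element of `S \ R` to the `k`-th smallest element of
`T`. -/
def IsAR (S T R : Finset ℝ) (N A : ℝ → ℝ) : Prop :=
  (∀ r ∈ R, A r = N r) ∧
  ∃ h : (S \ R).card = T.card,
    ∀ k : Fin T.card, A ((S \ R).orderEmbOfFin h k) = T.orderEmbOfFin rfl k

/-!
Sending every point to a nearest neighbor is the cheapest conceivable map, and an assignment pays on
top of it at least the excess `∑ (|e t - t| - |e t - N (e t)|)` of any choice `t ↦ e t` of preimages
of the points of `T`, with equality for `A_R` when `R` consists of the points not chosen. Let the
injection `e` minimize the excess, ties being broken by the sum of the squared displacements.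
Uncrossing two crossed pairs improves `e`, so `e` is increasing; moving the partner of `t` to an
unused point `r` between the two improves `e`, because the distance to the nearest neighbor is
1-Lipschitz, so no pair straddles an unused point. Hence up to an unused `r` there are as many used
points as points of `T`, and `H r` counts the unused points up to `r`.
-/

section MinWeight

variable {ι β Γ : Type*} [Fintype ι] [AddCommMonoid Γ]

/-- `e` is a matching of `ι` into `β` of minimum total weight, where `w k x` is the weight of
matching `k` with `x`. -/
def IsMinWeight [LE Γ] (w : ι → β → Γ) (e : ι ↪ β) : Prop :=
  ∀ f : ι ↪ β, ∑ k, w k (e k) ≤ ∑ k, w k (f k)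

lemma exists_isMinWeight [LinearOrder Γ] [Fintype β] (hcard : Fintype.card ι ≤ Fintype.card β)
    (w : ι → β → Γ) : ∃ e : ι ↪ β, IsMinWeight w e := by
  have : Nonempty (ι ↪ β) := Function.Embedding.nonempty_of_card_le hcard
  exact Finite.exists_min fun e : ι ↪ β => ∑ k, w k (e k)

namespace IsMinWeight

variable [PartialOrder Γ] [IsOrderedCancelAddMonoid Γ] {w : ι → β → Γ} {e : ι ↪ β}

lemma sum_le_sum_of_eqOn_compl (he : IsMinWeight w e) {s : Finset ι} {f : ι ↪ β}
    (hf : ∀ k ∉ s, f k = e k) : ∑ k ∈ s, w k (e k) ≤ ∑ k ∈ s, w k (f k) := by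
  classical
  have hcompl : ∑ k ∈ sᶜ, w k (f k) = ∑ k ∈ sᶜ, w k (e k) :=
    sum_congr rfl fun k hk => by rw [hf k (mem_compl.1 hk)]
  have hle := he f
  rw [← sum_add_sum_compl s, ← sum_add_sum_compl s fun k => w k (f k), hcompl] at hle
  exact le_of_add_le_add_right hle

lemma le_of_forall_ne (he : IsMinWeight w e) {x : β} (hx : ∀ k, e k ≠ x) (k : ι) :
    w k (e k) ≤ w k x := by
  classical
  have hoff : ∀ i ∉ ({k} : Finset ι), e.setValue k x i = e i := fun i hi =>
    Function.Embedding.setValue_eq_of_ne (notMem_singleton.1 hi) (hx i)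
  simpa only [sum_singleton, Function.Embedding.setValue_eq] using he.sum_le_sum_of_eqOn_compl hoff

lemma add_le_add_swap (he : IsMinWeight w e) {i j : ι} (hij : i ≠ j) :
    w i (e i) + w j (e j) ≤ w i (e j) + w j (e i) := by
  classical
  have hoff : ∀ k ∉ ({i, j} : Finset ι), (Equiv.swap i j).toEmbedding.trans e k = e k := by
    intro k hk
    simp only [mem_insert, mem_singleton, not_or] at hk
    simp [Equiv.swap_apply_of_ne_of_ne hk.1 hk.2]
  simpa [sum_pair hij] using he.sum_le_sum_of_eqOn_compl hoff

end IsMinWeight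

end MinWeight

section LexExcess

variable {ι α : Type*} [CommRing α] [LinearOrder α]

/-- The cost of matching `x` with `t` in excess of a base cost `d x`, which is the distance from `x`
to its nearest neighbor in the application. -/
def excess (d : α → α) (x t : α) : α :=
  |x - t| - d x

/-- The excess, with ties broken by the squared displacement. -/
def lexExcess (d : α → α) (x t : α) : α ×ₗ α :=
  toLex (excess d x t, (x - t) ^ 2)

variable {d : α → α} [Fintype ι] {t : ι → α} {S : Finset α} {e : ι ↪ S}

lemma IsMinWeight.excess_of_lexExcess
    (he : IsMinWeight (fun k (x : S) => lexExcess d x (t k)) e) :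
    IsMinWeight (fun k (x : S) => excess d x (t k)) e := by
  have hfst (f : ι ↪ S) :
      (ofLex (∑ k, lexExcess d (f k) (t k))).1 = ∑ k, excess d (f k) (t k) :=
    map_sum ((AddMonoidHom.fst α α).comp (ofLexAddEquiv (α × α)).toAddMonoidHom) _ _
  intro f
  simpa only [hfst] using Prod.Lex.monotone_fst _ _ (he f)

variable [IsStrictOrderedRing α]

lemma lexExcess_lt_of_between {a r t : α} (hd : d a ≤ d r + |a - r|)
    (hr : a < r ∧ r ≤ t ∨ t ≤ r ∧ r < a) : lexExcess d r t < lexExcess d a t := by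
  have hadd : |a - r| + |r - t| = |a - t| := by grind
  have hlt : |r - t| < |a - t| := by grind
  have hexcess : excess d r t ≤ excess d a t := by
    simp only [excess]
    linarith
  exact Prod.Lex.toLex_lt_toLex'.2 ⟨hexcess, fun _ => sq_lt_sq.2 hlt⟩

lemma lexExcess_add_lt_of_crossing {a b t u : α} (hba : b < a) (htu : t < u) :
    lexExcess d b t + lexExcess d a u < lexExcess d a t + lexExcess d b u := by
  have habs : |b - t| + |a - u| ≤ |a - t| + |b - u| := by grind
  have hsq : (b - t) ^ 2 + (a - u) ^ 2 < (a - t) ^ 2 + (b - u) ^ 2 := by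
    nlinarith [mul_pos (sub_pos.2 hba) (sub_pos.2 htu)]
  have hexcess : excess d b t + excess d a u ≤ excess d a t + excess d b u := by
    simp only [excess]
    linarith
  exact Prod.Lex.toLex_lt_toLex'.2 ⟨hexcess, fun _ => hsq⟩

lemma IsMinWeight.strictMono_of_lexExcess [LinearOrder ι] (ht : StrictMono t)
    (he : IsMinWeight (fun k (x : S) => lexExcess d x (t k)) e) : StrictMono e := by
  intro i j hij
  by_contra! hji
  have hlt : (e j : α) < e i :=
    lt_of_le_of_ne hji (Subtype.coe_injective.ne (e.injective.ne hij.ne'))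
  exact (lexExcess_add_lt_of_crossing hlt (ht hij)).not_ge (he.add_le_add_swap hij.ne)

lemma IsMinWeight.le_iff_le_of_lexExcess (hd : ∀ a ∈ S, ∀ r ∈ S, d a ≤ d r + |a - r|)
    (he : IsMinWeight (fun k (x : S) => lexExcess d x (t k)) e) {r : S} (hr : ∀ k, e k ≠ r)
    (k : ι) : (e k : α) ≤ r ↔ t k ≤ r := by
  by_contra hiff
  have hne : (e k : α) ≠ r := Subtype.coe_injective.ne (hr k)
  have hbetween : (e k : α) < r ∧ (r : α) ≤ t k ∨ t k ≤ r ∧ (r : α) < e k := by grind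
  exact (lexExcess_lt_of_between (hd _ (e k).2 _ r.2) hbetween).not_ge (he.le_of_forall_ne hr k)

end LexExcess

section Matched

variable {ι α : Type*} [Fintype ι] {S : Finset α} {e : ι ↪ S}

/-- The points of `S` used by the matching `e`, as a finset of the ambient type. -/
def matched (e : ι ↪ S) : Finset α :=
  univ.map (e.trans (.subtype _))

lemma mem_matched {x : α} : x ∈ matched e ↔ ∃ k, (e k : α) = x := by
  simp [matched]

lemma matched_subset (e : ι ↪ S) : matched e ⊆ S := by
  intro x hx
  obtain ⟨k, rfl⟩ := mem_matched.1 hx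
  exact (e k).2

lemma card_matched (e : ι ↪ S) : #(matched e) = Fintype.card ι := by
  rw [matched, card_map, card_univ]

end Matched

section Counting

lemma card_filter_univ_map {ι α : Type*} [Fintype ι] (f : ι ↪ α) (p : α → Prop)
    [DecidablePred p] : #{x ∈ univ.map f | p x} = #{k | p (f k)} := by
  rw [filter_map, card_map]
  rfl

lemma card_filter_le_orderEmbOfFin {α : Type*} [LinearOrder α] {R : Finset α} {n : ℕ}
    (h : #R = n) (k : Fin n) : #{x ∈ R | x ≤ R.orderEmbOfFin h k} = k + 1 := by
  set r := R.orderEmbOfFin h k with hr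
  rw [← R.map_orderEmbOfFin_univ h, card_filter_univ_map, ← Fin.card_Iic k]
  congr 1
  ext i
  simp [hr]

lemma heightFn_eq_card_sdiff {S T I : Finset ℝ} {x : ℝ} (hI : I ⊆ S)
    (hIT : #{s ∈ I | s ≤ x} = #{t ∈ T | t ≤ x}) : heightFn S T x = #{s ∈ S \ I | s ≤ x} := by
  have hsplit : #{s ∈ S \ I | s ≤ x} + #{s ∈ I | s ≤ x} = #{s ∈ S | s ≤ x} := by
    rw [← sdiff_union_of_subset hI, filter_union, card_union_of_disjoint
      (disjoint_filter_filter sdiff_disjoint), sdiff_union_of_subset hI]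
  rw [heightFn, ← hIT, ← hsplit]
  push_cast
  ring

lemma heightFn_orderEmbOfFin_sdiff_matched {S T : Finset ℝ} {e : Fin #T ↪ S} {n : ℕ}
    (hcard : #(S \ matched e) = n)
    (hle : ∀ r : S, (∀ k, e k ≠ r) → ∀ k, (e k : ℝ) ≤ r ↔ T.orderEmbOfFin rfl k ≤ r)
    (k : Fin n) : heightFn S T ((S \ matched e).orderEmbOfFin hcard k) = (k : ℤ) + 1 := by
  have hcount := card_filter_le_orderEmbOfFin hcard k
  have hmem := orderEmbOfFin_mem _ hcard k
  set r := (S \ matched e).orderEmbOfFin hcard k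
  obtain ⟨hrS, hrI⟩ := mem_sdiff.1 hmem
  have hunused : ∀ k, e k ≠ ⟨r, hrS⟩ := fun k hk =>
    hrI (mem_matched.2 ⟨k, congrArg Subtype.val hk⟩)
  have hIT : #{s ∈ matched e | s ≤ r} = #{t ∈ T | t ≤ r} := by
    conv_rhs => rw [← T.map_orderEmbOfFin_univ rfl]
    rw [matched, card_filter_univ_map, card_filter_univ_map]
    simp [hle ⟨r, hrS⟩ hunused]
  rw [heightFn_eq_card_sdiff (matched_subset e) hIT, hcount, Nat.cast_succ]

end Counting

section Assignment

variable {S T : Finset ℝ} {N : ℝ → ℝ}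

lemma IsNearestNeighbor.abs_sub_le_add (hN : IsNearestNeighbor S T N) {a r : ℝ} (ha : a ∈ S)
    (hr : r ∈ S) : |a - N a| ≤ |r - N r| + |a - r| :=
  calc |a - N a| ≤ |a - N r| := (hN a ha).2 _ (hN r hr).1
    _ ≤ |a - r| + |r - N r| := abs_sub_le a r (N r)
    _ = |r - N r| + |a - r| := add_comm _ _

/-- The assignment which follows the matching `e` of `T` into `S`, the points of `T` being indexed
in increasing order, and maps the unmatched points by `N`. -/
noncomputable def assignmentOfMatching (N : ℝ → ℝ) (e : Fin #T ↪ S) : ℝ → ℝ :=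
  Function.extend (fun k => (e k : ℝ)) (T.orderEmbOfFin rfl) N

lemma assignmentOfMatching_apply (e : Fin #T ↪ S) (k : Fin #T) :
    assignmentOfMatching N e (e k) = T.orderEmbOfFin rfl k :=
  (Subtype.val_injective.comp e.injective).extend_apply _ _ k

lemma assignmentOfMatching_of_notMem {e : Fin #T ↪ S} {x : ℝ} (hx : x ∉ matched e) :
    assignmentOfMatching N e x = N x :=
  Function.extend_apply' _ _ _ (mt mem_matched.2 hx)

lemma isAR_assignmentOfMatching {e : Fin #T ↪ S} (he : StrictMono e) :
    IsAR S T (S \ matched e) N (assignmentOfMatching N e) := by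
  have hcard : #(S \ (S \ matched e)) = #T := by
    rw [Finset.sdiff_sdiff_eq_self (matched_subset e), card_matched, Fintype.card_fin]
  have henum : (fun k => (e k : ℝ)) = (S \ (S \ matched e)).orderEmbOfFin hcard := by
    refine orderEmbOfFin_unique hcard (fun k => ?_) he
    rw [Finset.sdiff_sdiff_eq_self (matched_subset e)]
    exact mem_matched.2 ⟨k, rfl⟩
  refine ⟨fun r hr => assignmentOfMatching_of_notMem (mem_sdiff.1 hr).2, hcard, fun k => ?_⟩
  rw [← henum, assignmentOfMatching_apply]

lemma cost_assignmentOfMatching (N : ℝ → ℝ) (e : Fin #T ↪ S) :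
    ∑ s ∈ S, |s - assignmentOfMatching N e s| =
      ∑ s ∈ S, |s - N s| + ∑ k, excess (fun s => |s - N s|) (e k) (T.orderEmbOfFin rfl k) := by
  rw [← sub_eq_iff_eq_add', ← sum_sub_distrib, ← sum_subset (matched_subset e), matched, sum_map]
  · simp [excess, assignmentOfMatching_apply]
  · intro s _ hs
    rw [assignmentOfMatching_of_notMem hs, sub_self]

lemma IsAssignment.exists_section {A : ℝ → ℝ} (hA : IsAssignment S T A) {ι : Type*} {t : ι ↪ ℝ}
    (ht : ∀ k, t k ∈ T) : ∃ f : ι ↪ S, ∀ k, A (f k) = t k := by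
  choose f hfS hfA using fun k => hA.2 (t k) (ht k)
  refine ⟨⟨fun k => ⟨f k, hfS k⟩, fun i j hij => t.injective ?_⟩, hfA⟩
  rw [← hfA i, ← hfA j, Subtype.mk.inj hij]

lemma IsAssignment.sum_add_sum_excess_le_cost (hN : IsNearestNeighbor S T N) {A : ℝ → ℝ}
    (hA : IsAssignment S T A) {ι : Type*} [Fintype ι] (f : ι ↪ S) :
    ∑ s ∈ S, |s - N s| + ∑ k, excess (fun s => |s - N s|) (f k) (A (f k)) ≤
      ∑ s ∈ S, |s - A s| := by
  have hexcess : ∑ k, excess (fun s => |s - N s|) (f k) (A (f k)) =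
      ∑ s ∈ matched f, (|s - A s| - |s - N s|) := by
    rw [matched, sum_map]
    rfl
  rw [← le_sub_iff_add_le', ← sum_sub_distrib, hexcess]
  exact sum_le_sum_of_subset_of_nonneg (matched_subset f) fun s hs _ =>
    sub_nonneg.2 ((hN s hs).2 _ (hA.1 s hs))

lemma IsMinWeight.cost_assignmentOfMatching_le (hN : IsNearestNeighbor S T N) {e : Fin #T ↪ S}
    (he : IsMinWeight
      (fun k (x : S) => excess (fun s => |s - N s|) x (T.orderEmbOfFin rfl k)) e)
    {A : ℝ → ℝ} (hA : IsAssignment S T A) :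
    ∑ s ∈ S, |s - assignmentOfMatching N e s| ≤ ∑ s ∈ S, |s - A s| := by
  obtain ⟨f, hf⟩ := hA.exists_section (t := (T.orderEmbOfFin rfl).toEmbedding)
    (T.orderEmbOfFin_mem rfl)
  calc ∑ s ∈ S, |s - assignmentOfMatching N e s|
      = ∑ s ∈ S, |s - N s| + ∑ k, excess (fun s => |s - N s|) (e k) (T.orderEmbOfFin rfl k) :=
        cost_assignmentOfMatching N e
    _ ≤ ∑ s ∈ S, |s - N s| + ∑ k, excess (fun s => |s - N s|) (f k) (T.orderEmbOfFin rfl k) :=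
        add_le_add le_rfl (he f)
    _ = ∑ s ∈ S, |s - N s| + ∑ k, excess (fun s => |s - N s|) (f k) (A (f k)) := by
        simp only [hf, RelEmbedding.coe_toEmbedding]
    _ ≤ ∑ s ∈ S, |s - A s| := hA.sum_add_sum_excess_le_cost hN f

end Assignment

theorem exists_R_min_cost_with_heights_general (S T : Finset ℝ) (hTS : #T ≤ #S)
    (N : ℝ → ℝ) (hN : IsNearestNeighbor S T N) :
    ∃ (R : Finset ℝ) (A : ℝ → ℝ) (hcard : R.card = S.card - T.card),
      R ⊆ S ∧ IsAR S T R N A ∧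
      (∀ A' : ℝ → ℝ, IsAssignment S T A' →
        ∑ s ∈ S, |s - A s| ≤ ∑ s ∈ S, |s - A' s|) ∧
      ∀ k : Fin (S.card - T.card),
        heightFn S T (R.orderEmbOfFin hcard k) = (k : ℤ) + 1 := by
  obtain ⟨e, he⟩ := exists_isMinWeight (ι := Fin #T) (β := S) (by simpa using hTS)
    fun k x => lexExcess (fun s => |s - N s|) x (T.orderEmbOfFin rfl k)
  have hcard : #(S \ matched e) = #S - #T := by
    rw [card_sdiff_of_subset (matched_subset e), card_matched, Fintype.card_fin]
  have hmono : StrictMono e := he.strictMono_of_lexExcess (T.orderEmbOfFin rfl).strictMono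
  have hle (r : S) (hr : ∀ k, e k ≠ r) (k : Fin #T) :
      (e k : ℝ) ≤ r ↔ T.orderEmbOfFin rfl k ≤ r :=
    he.le_iff_le_of_lexExcess (fun _ ha _ hb => hN.abs_sub_le_add ha hb) hr k
  exact ⟨S \ matched e, assignmentOfMatching N e, hcard, sdiff_subset,
    isAR_assignmentOfMatching hmono, fun _ hA =>
      he.excess_of_lexExcess.cost_assignmentOfMatching_le hN hA,
    heightFn_orderEmbOfFin_sdiff_matched hcard hle⟩

/-- there exists `R ⊆ S` with `|R| = |S| − |T|` such that `A_R` is a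
minimum-cost assignment from `S` to `T` and the `k`-th smallest element `r_k` of `R`
satisfies `H(r_k) = k`. -/
theorem exists_R_min_cost_with_heights (S T : Finset ℝ)
    (hdisj : Disjoint S T) (hST : T.card < S.card) (hT : 1 ≤ T.card)
    (N : ℝ → ℝ) (hN : IsNearestNeighbor S T N) :
    ∃ (R : Finset ℝ) (A : ℝ → ℝ) (hcard : R.card = S.card - T.card),
      R ⊆ S ∧ IsAR S T R N A ∧
      (∀ A' : ℝ → ℝ, IsAssignment S T A' →
        ∑ s ∈ S, |s - A s| ≤ ∑ s ∈ S, |s - A' s|) ∧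
      ∀ k : Fin (S.card - T.card),
        heightFn S T (R.orderEmbOfFin hcard k) = (k : ℤ) + 1 :=
  exists_R_min_cost_with_heights_general S T hST.le N hN
end

section
/- Let S and T be finite sets of real numbers with S ∩ T = ∅ and |S| > |T| ≥ 1, and let m = max(S ∪ T). Let s', s ∈ S and t ∈ T with s' < t < s, let k be an integer, and suppose H(x) ≥ k for all x ∈ [s', t) and H(x) < k for all x ∈ [t, s). Then ∫_{s'}^{m} h^{k}(x) dx = ∫_{s}^{m} h^{k}(x) dx + (t − s') − (s − t). -/
open Finset MeasureTheory

/-- The relative height `h^k(x)`: `1` if `H(x) ≥ k` and `−1` otherwise. -/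
noncomputable def relHeight (S T : Finset ℝ) (k : ℤ) (x : ℝ) : ℝ :=
  if k ≤ heightFn S T x then 1 else -1

theorem monotone_card_filter_le {α : Type*} [Preorder α] [DecidableLE α] (S : Finset α) :
    Monotone fun x => (S.filter (· ≤ x)).card :=
  fun _ _ hxy => card_le_card <| monotone_filter_right S fun _ _ hs => hs.trans hxy

theorem measurable_heightFn (S T : Finset ℝ) : Measurable (heightFn S T) :=
  have measurable_count (U : Finset ℝ) :
      Measurable fun x => ((U.filter (· ≤ x)).card : ℤ) :=
    Measurable.of_discrete.comp (monotone_card_filter_le U).measurable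
  (measurable_count S).sub (measurable_count T)

section RelHeight

variable {S T : Finset ℝ} {k : ℤ} {a b x : ℝ}

theorem relHeight_of_le (h : k ≤ heightFn S T x) : relHeight S T k x = 1 :=
  if_pos h

theorem relHeight_of_lt (h : heightFn S T x < k) : relHeight S T k x = -1 :=
  if_neg h.not_ge

theorem norm_relHeight (S T : Finset ℝ) (k : ℤ) (x : ℝ) : ‖relHeight S T k x‖ = 1 := by
  rcases le_or_gt k (heightFn S T x) with h | h
  · rw [relHeight_of_le h, norm_one]
  · rw [relHeight_of_lt h, norm_neg, norm_one]

theorem measurable_relHeight (S T : Finset ℝ) (k : ℤ) : Measurable (relHeight S T k) :=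
  Measurable.ite (measurableSet_le measurable_const (measurable_heightFn S T))
    measurable_const measurable_const

theorem intervalIntegrable_relHeight (S T : Finset ℝ) (k : ℤ) (μ : Measure ℝ)
    [IsLocallyFiniteMeasure μ] (a b : ℝ) : IntervalIntegrable (relHeight S T k) μ a b :=
  (intervalIntegrable_const (c := (1 : ℝ))).mono_fun'
    (measurable_relHeight S T k).aestronglyMeasurable
    (.of_forall fun x => (norm_relHeight S T k x).le)

theorem integral_relHeight_of_le (hab : a ≤ b) (h : ∀ x ∈ Set.Ioo a b, k ≤ heightFn S T x) :
    ∫ x in a..b, relHeight S T k x = b - a :=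
  calc ∫ x in a..b, relHeight S T k x
    _ = ∫ _ in a..b, (1 : ℝ) :=
      intervalIntegral.integral_congr_Ioo_of_le hab fun x hx => relHeight_of_le (h x hx)
    _ = b - a := integral_one

theorem integral_relHeight_of_lt (hab : a ≤ b) (h : ∀ x ∈ Set.Ioo a b, heightFn S T x < k) :
    ∫ x in a..b, relHeight S T k x = -(b - a) :=
  calc ∫ x in a..b, relHeight S T k x
    _ = ∫ _ in a..b, (-1 : ℝ) :=
      intervalIntegral.integral_congr_Ioo_of_le hab fun x hx => relHeight_of_lt (h x hx)
    _ = -(b - a) := by rw [intervalIntegral.integral_const, smul_eq_mul, mul_neg_one]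

theorem relHeight_integral_step_general {s' t s : ℝ} (hs't : s' ≤ t) (hts : t ≤ s)
    (hle : ∀ x ∈ Set.Ioo s' t, k ≤ heightFn S T x)
    (hlt : ∀ x ∈ Set.Ioo t s, heightFn S T x < k) (m : ℝ) :
    ∫ x in s'..m, relHeight S T k x =
      (∫ x in s..m, relHeight S T k x) + (t - s') - (s - t) := by
  have hint := intervalIntegrable_relHeight S T k volume
  calc ∫ x in s'..m, relHeight S T k x
    _ = (∫ x in s'..t, relHeight S T k x) + ((∫ x in t..s, relHeight S T k x) +
          ∫ x in s..m, relHeight S T k x) := by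
      rw [intervalIntegral.integral_add_adjacent_intervals (hint t s) (hint s m),
        intervalIntegral.integral_add_adjacent_intervals (hint s' t) (hint t m)]
    _ = (t - s') + (-(s - t) + ∫ x in s..m, relHeight S T k x) := by
      rw [integral_relHeight_of_le hs't hle, integral_relHeight_of_lt hts hlt]
    _ = (∫ x in s..m, relHeight S T k x) + (t - s') - (s - t) := by ring

end RelHeight

/-- if `s' < t < s` with `s', s ∈ S`, `t ∈ T`, `H(x) ≥ k` on `[s', t)`
and `H(x) < k` on `[t, s)`, then
`∫_{s'}^m h^k = ∫_s^m h^k + (t − s') − (s − t)`, where `m = max (S ∪ T)`. -/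
theorem relHeight_integral_step (S T : Finset ℝ)
    (hdisj : Disjoint S T) (hST : T.card < S.card) (hT : 1 ≤ T.card)
    (hne : (S ∪ T).Nonempty)
    (s' s t : ℝ) (hs' : s' ∈ S) (hs : s ∈ S) (ht : t ∈ T)
    (h1 : s' < t) (h2 : t < s) (k : ℤ)
    (hk1 : ∀ x ∈ Set.Ico s' t, k ≤ heightFn S T x)
    (hk2 : ∀ x ∈ Set.Ico t s, heightFn S T x < k) :
    ∫ x in s'..((S ∪ T).max' hne), relHeight S T k x =
      (∫ x in s..((S ∪ T).max' hne), relHeight S T k x) + (t - s') - (s - t) :=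
  relHeight_integral_step_general h1.le h2.le (fun x hx => hk1 x (Set.Ioo_subset_Ico_self hx))
    (fun x hx => hk2 x (Set.Ioo_subset_Ico_self hx)) _
end
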